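/- Let w be a positive even integer and let E be an odd weighted Dedekind symbol of weight w whose reciprocity function is a polynomial, i.e. there exists a homogeneous polynomial g(X,Y) of degree w with complex coefficients such that E(h,k) − E(k,−h) = g(h,k) for all h,k ∈ ℤ⁺. Then E is a linear combination of the symbols E_{w,n} for even n with 0 < n < w; that is, there exist constants c_n ∈ ℂ (n even, 0<n<w) such that E(h,k) = Σ_{0<n<w, n even} c_n·E_{w,n}(h,k) for all (h,k) ∈ ℤ⁺×ℤ. -/

import Mathlib

open scoped Classical
open MvPolynomial

/-- A weighted Dedekind symbol of weight `w`. -/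
def IsDedekindSymbol (w : ℕ) (E : ℤ → ℤ → ℂ) : Prop :=
  (∀ h k : ℤ, 0 < h → E h (k + h) = E h k) ∧
  (∀ h k c : ℤ, 0 < h → 0 < c → E (c * h) (c * k) = (c : ℂ) ^ w * E h k)

/-- The `m`-th Bernoulli function `B̄_m(x) = B_m(x − ⌊x⌋)` (ℂ-valued, rational argument). -/
noncomputable def Bbar (m : ℕ) (x : ℚ) : ℂ :=
  ((Polynomial.bernoulli m).eval (x - ⌊x⌋) : ℚ)

/-- The `m`-th Bernoulli polynomial evaluated at a complex number. -/
noncomputable def Bpoly (m : ℕ) (x : ℂ) : ℂ :=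
  Polynomial.aeval x (Polynomial.bernoulli m)

/-- The `m`-th Bernoulli number `B_m = B_m(0)`. -/
noncomputable def Bnum (m : ℕ) : ℂ := ((bernoulli m : ℚ) : ℂ)

/-- The finite sum `I_{w,n}(h,k) = (1/2)·∑ sgn(k/h+b/a)·(ak+bh)^{w-n}·(ck+dh)^n`,
over quadruples `(a,b,c,d) ∈ ℤ⁴` with `ad−bc = 1`, `a ≠ 0`, `c ≠ 0`,
`|b+⌊k/h+1/2⌋a| ≤ |a| ≤ h`, `|d+⌊k/h+1/2⌋c| ≤ |c| ≤ h` and `(k/h+b/a)(k/h+d/c) < 0`;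
the factor `1/2` accounts for the quotient of `SL(2,ℤ)` by `±1`. -/
noncomputable def Iwn (w n : ℕ) (h k : ℤ) : ℂ :=
  (1 / 2) * ∑ᶠ p : ℤ × ℤ × ℤ × ℤ,
    if p.1 * p.2.2.2 - p.2.1 * p.2.2.1 = 1 ∧ p.1 ≠ 0 ∧ p.2.2.1 ≠ 0 ∧
        |p.2.1 + ⌊(k : ℚ) / h + 1 / 2⌋ * p.1| ≤ |p.1| ∧ |p.1| ≤ h ∧
        |p.2.2.2 + ⌊(k : ℚ) / h + 1 / 2⌋ * p.2.2.1| ≤ |p.2.2.1| ∧ |p.2.2.1| ≤ h ∧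
        ((k : ℚ) / h + p.2.1 / p.1) * ((k : ℚ) / h + p.2.2.2 / p.2.2.1) < 0 then
      (Real.sign ((k : ℝ) / h + (p.2.1 : ℝ) / p.1) : ℂ) *
        ((p.1 * k + p.2.1 * h : ℤ) : ℂ) ^ (w - n) * ((p.2.2.1 * k + p.2.2.2 * h : ℤ) : ℂ) ^ n
    else 0

/-- `E_{w,n}` for even `n`. -/
noncomputable def EwnEven (w n : ℕ) (h k : ℤ) : ℂ :=
  Iwn w n h k + Bbar (n + 1) ((k : ℚ) / h) / ((n : ℂ) + 1) * (h : ℂ) ^ w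
    - Bbar (w - n + 1) ((k : ℚ) / h) / (((w - n : ℕ) : ℂ) + 1) * (h : ℂ) ^ w


def SS (u v : ℤ) : Set (ℤ × ℤ × ℤ × ℤ) :=
  {x | 0 ≤ x.1 ∧ 0 ≤ x.2.1 ∧ 0 ≤ x.2.2.1 ∧ 0 ≤ x.2.2.2 ∧ x.1 * x.2.2.2 - x.2.1 * x.2.2.1 = 1 ∧
    0 < x.1 * u - x.2.1 * v ∧ 0 < x.2.2.2 * v - x.2.2.1 * u}

theorem SS_lt {u v : ℤ} (hu : 0 < u) (huv : u < v) :
    SS u v = insert (1, 0, 0, 1)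
      ((fun x : ℤ × ℤ × ℤ × ℤ => (x.1 + x.2.1, x.2.1, x.2.2.1 + x.2.2.2, x.2.2.2)) '' SS u (v - u)) := by
  ext ⟨a, b, c, d⟩
  simp only [SS, Set.mem_insert_iff, Set.mem_image, Set.mem_ofPred_eq, Prod.mk.injEq, Prod.exists]
  constructor
  · rintro ⟨ha, hb, hc, hd, h1, h2, h3⟩
    have hab : b < a := by
      by_contra hcon
      push Not at hcon
      nlinarith [mul_le_mul_of_nonneg_right hcon hu.le, mul_le_mul_of_nonneg_left huv.le hb]
    by_cases hcd : d ≤ c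
    · right
      refine ⟨a - b, b, c - d, d, ⟨by omega, hb, by omega, hd, by linarith, by linarith, by linarith⟩,
        by ring, rfl, by ring, rfl⟩
    · left
      push Not at hcd
      have : (b + 1) * (c + 1) ≤ a * d :=
        mul_le_mul (by omega) (by omega) (by omega) ha
      have hb0 : b = 0 := by nlinarith
      have hc0 : c = 0 := by nlinarith
      subst hb0 hc0
      have : a * d = 1 := by linarith
      have := Int.eq_one_or_neg_one_of_mul_eq_one this
      have ha1 : a = 1 := by omega
      subst ha1
      refine ⟨rfl, rfl, rfl, by linarith⟩
  · rintro (⟨rfl, rfl, rfl, rfl⟩ | ⟨a', b', c', d', ⟨ha, hb, hc, hd, h1, h2, h3⟩, rfl, rfl, rfl, rfl⟩)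
    · simp; omega
    · refine ⟨by omega, hb, by omega, hd, by linarith, by linarith, by linarith⟩

theorem SS_swap (u v : ℤ) : Set.BijOn (fun x : ℤ × ℤ × ℤ × ℤ => (x.2.2.2, x.2.2.1, x.2.1, x.1))
    (SS u v) (SS v u) := by
  refine ⟨?_, ?_, ?_⟩
  · rintro ⟨a, b, c, d⟩ ⟨ha, hb, hc, hd, h1, h2, h3⟩
    exact ⟨hd, hc, hb, ha, by simp at *; linarith, h3, h2⟩
  · rintro ⟨a, b, c, d⟩ _ ⟨a', b', c', d'⟩ _ h
    simp only [Prod.mk.injEq] at h ⊢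
    tauto
  · rintro ⟨a, b, c, d⟩ ⟨ha, hb, hc, hd, h1, h2, h3⟩
    refine ⟨(d, c, b, a), ⟨hd, hc, hb, ha, by simp at *; linarith, h3, h2⟩, rfl⟩

theorem SS_sum (F P : ℤ → ℤ → ℂ) (hF0 : ∀ v, 0 < v → F 0 v = 0)
    (hFs : ∀ u v, 0 ≤ u → 0 ≤ v → 0 < u + v → F u v = - F v u)
    (hPs : ∀ u v, 0 < u → 0 < v → P u v = - P v u)
    (hrec : ∀ u v, 0 < u → u < v → F u v = P u v + F u (v - u)) (N : ℕ) :
    ∀ u v : ℤ, 0 ≤ u → 0 ≤ v → 0 < u + v → u + v ≤ N → (SS u v).Finite ∧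
      ∑ᶠ x ∈ SS u v, P (x.1 * u - x.2.1 * v) (x.2.2.2 * v - x.2.2.1 * u) = F u v := by
  induction N with
  | zero => intro u v _ _ h1 h2; exfalso; push_cast at h2; omega
  | succ N ih =>
    have key : ∀ u v : ℤ, 0 ≤ u → 0 < u + v → u + v ≤ (N + 1 : ℕ) → u < v → (SS u v).Finite ∧
      ∑ᶠ x ∈ SS u v, P (x.1 * u - x.2.1 * v) (x.2.2.2 * v - x.2.2.1 * u) = F u v := by
      intro u v hu h0 hN huv
      rcases hu.eq_or_lt with rfl | hu
      · have : SS 0 v = ∅ := by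
          ext ⟨a, b, c, d⟩
          simp only [SS, Set.mem_ofPred_eq, Set.mem_empty_iff_false, iff_false]
          rintro ⟨ha, hb, hc, hd, h1, h2, h3⟩
          nlinarith
        rw [this]
        simp [hF0 v (by omega)]
      · obtain ⟨hf, hs⟩ := ih u (v - u) hu.le (by omega) (by omega) (by push_cast at hN; omega)
        rw [SS_lt hu huv]
        refine ⟨(hf.image _).insert _, ?_⟩
        rw [finsum_mem_insert _ _ (hf.image _), finsum_mem_image]
        · rw [hrec u v hu huv, ← hs]
          congr 1
          · simp
          · apply finsum_mem_congr rfl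
            rintro ⟨a, b, c, d⟩ _
            simp only
            congr 1 <;> ring
        · rintro ⟨a, b, c, d⟩ _ ⟨a', b', c', d'⟩ _ h
          simp only [Prod.mk.injEq] at h ⊢
          omega
        · rintro ⟨⟨a, b, c, d⟩, ⟨ha, hb, hc, hd, h1, h2, h3⟩, h⟩
          simp only [Prod.mk.injEq] at *
          omega
    intro u v hu hv h0 hN
    rcases lt_trichotomy u v with h | h | h
    · exact key u v hu h0 hN h
    · subst h
      have : SS u u = {(1, 0, 0, 1)} := by
        ext ⟨a, b, c, d⟩
        simp only [SS, Set.mem_ofPred_eq, Set.mem_singleton_iff, Prod.mk.injEq]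
        constructor
        · rintro ⟨ha, hb, hc, hd, h1, h2, h3⟩
          have hab : b < a := by nlinarith
          have hcd : c < d := by nlinarith
          have : (b + 1) * (c + 1) ≤ a * d :=
            mul_le_mul (by omega) (by omega) (by omega) ha
          have hb0 : b = 0 := by nlinarith
          have hc0 : c = 0 := by nlinarith
          subst hb0 hc0
          have : a * d = 1 := by linarith
          have := Int.eq_one_or_neg_one_of_mul_eq_one this
          have ha1 : a = 1 := by omega
          subst ha1
          refine ⟨rfl, rfl, rfl, by linarith⟩
        · rintro ⟨rfl, rfl, rfl, rfl⟩
          simp; omega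
      rw [this]
      refine ⟨Set.finite_singleton _, ?_⟩
      rw [finsum_mem_singleton]
      have h1 := hFs u u hu hu h0
      have h2 := hPs u u (by omega) (by omega)
      have h1 : F u u = 0 := self_eq_neg.mp h1
      have h2 : P u u = 0 := self_eq_neg.mp h2
      simp [h1, h2]
    · obtain ⟨hf, hs⟩ := key v u hv (by omega) (by omega) h
      have hb := SS_swap v u
      have hf' : (SS u v).Finite := by rw [← hb.image_eq]; exact hf.image _
      refine ⟨hf', ?_⟩
      rw [hFs u v hu hv h0, ← hs, ← finsum_mem_neg_distrib _ hf]
      symm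
      apply finsum_mem_eq_of_bijOn _ hb
      rintro ⟨a, b, c, d⟩ ⟨ha, hb, hc, hd, h1, h2, h3⟩
      simp only at *
      rw [hPs _ _ h2 h3, neg_neg]
def CC (h k : ℤ) : Set (ℤ × ℤ × ℤ × ℤ) :=
  {p | p.1 * p.2.2.2 - p.2.1 * p.2.2.1 = 1 ∧ p.1 ≠ 0 ∧ p.2.2.1 ≠ 0 ∧
        |p.2.1| ≤ |p.1| ∧ |p.1| ≤ h ∧ |p.2.2.2| ≤ |p.2.2.1| ∧ |p.2.2.1| ≤ h ∧
        ((p.1 * k + p.2.1 * h) * p.1) * ((p.2.2.1 * k + p.2.2.2 * h) * p.2.2.1) < 0}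

noncomputable def tm (w n : ℕ) (h k : ℤ) (p : ℤ × ℤ × ℤ × ℤ) : ℂ :=
  ((Int.sign ((p.1 * k + p.2.1 * h) * p.1) : ℤ) : ℂ) * ((p.1 * k + p.2.1 * h : ℤ) : ℂ) ^ (w - n) *
    ((p.2.2.1 * k + p.2.2.2 * h : ℤ) : ℂ) ^ n

noncomputable def JJ (w n : ℕ) (h k : ℤ) : ℂ := (1 / 2) * ∑ᶠ p ∈ CC h k, tm w n h k p

def shE (m : ℤ) : (ℤ × ℤ × ℤ × ℤ) ≃ (ℤ × ℤ × ℤ × ℤ) where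
  toFun p := (p.1, p.2.1 - m * p.1, p.2.2.1, p.2.2.2 - m * p.2.2.1)
  invFun p := (p.1, p.2.1 + m * p.1, p.2.2.1, p.2.2.2 + m * p.2.2.1)
  left_inv p := by simp
  right_inv p := by simp

theorem sign_aux (h k a b : ℤ) (hh : 0 < h) (ha : a ≠ 0) :
    Real.sign ((k : ℝ) / h + (b : ℝ) / a) = ((Int.sign ((a * k + b * h) * a) : ℤ) : ℝ) := by
  have hh' : (0 : ℝ) < h := by exact_mod_cast hh
  have ha' : (a : ℝ) ≠ 0 := by exact_mod_cast ha
  have ha2 : (0 : ℝ) < a ^ 2 := by positivity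
  have e : (k : ℝ) / h + (b : ℝ) / a = (((a * k + b * h) * a : ℤ) : ℝ) / (h * a ^ 2) := by
    push_cast; field_simp
  rw [e]
  rcases lt_trichotomy ((a * k + b * h) * a) 0 with hl | hl | hl
  · rw [Int.sign_eq_neg_one_of_neg hl, Real.sign_of_neg]
    · simp
    · apply div_neg_of_neg_of_pos _ (by positivity)
      exact_mod_cast hl
  · rw [hl]; simp
  · rw [Int.sign_eq_one_of_pos hl, Real.sign_of_pos]
    · simp
    · apply div_pos _ (by positivity)
      exact_mod_cast hl

theorem cond_aux (h k a b c d : ℤ) (hh : 0 < h) (ha : a ≠ 0) (hc : c ≠ 0) :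
    ((k : ℚ) / h + b / a) * ((k : ℚ) / h + d / c) < 0 ↔
      ((a * k + b * h) * a) * ((c * k + d * h) * c) < 0 := by
  have hh' : (0 : ℚ) < h := by exact_mod_cast hh
  have ha' : (a : ℚ) ≠ 0 := by exact_mod_cast ha
  have hc' : (c : ℚ) ≠ 0 := by exact_mod_cast hc
  have e : ((k : ℚ) / h + b / a) * ((k : ℚ) / h + d / c) =
      ((((a * k + b * h) * a) * ((c * k + d * h) * c) : ℤ) : ℚ) / (h ^ 2 * a ^ 2 * c ^ 2) := by
    push_cast; field_simp
  rw [e, div_lt_iff₀ (by positivity), zero_mul]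
  exact_mod_cast Iff.rfl

theorem Iwn_eq_JJ (w n : ℕ) (h k : ℤ) (hh : 0 < h) :
    Iwn w n h k = JJ w n h (k - ⌊(k : ℚ) / h + 1 / 2⌋ * h) := by
  unfold Iwn JJ
  congr 1
  generalize ⌊(k : ℚ) / h + 1 / 2⌋ = m
  rw [← finsum_comp_equiv (shE m), finsum_mem_def]
  apply finsum_congr
  rintro ⟨a, b, c, d⟩
  have e1 : a * k + (b - m * a) * h = a * (k - m * h) + b * h := by ring
  have e2 : c * k + (d - m * c) * h = c * (k - m * h) + d * h := by ring
  have e3 : a * (d - m * c) - (b - m * a) * c = a * d - b * c := by ring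
  rw [Set.indicator_apply]
  by_cases ha : a = 0
  · simp [ha, CC, shE]
  by_cases hc : c = 0
  · simp [hc, CC, shE]
  refine if_congr ?_ ?_ rfl
  · simp only [shE, Equiv.coe_fn_mk, CC, Set.mem_ofPred_eq]
    rw [cond_aux h k a (b - m * a) c (d - m * c) hh ha hc, e1, e2, e3, sub_add_cancel,
      sub_add_cancel]
  · simp only [shE, Equiv.coe_fn_mk, tm]
    rw [sign_aux h k a (b - m * a) hh ha, e1, e2]
    simp only [Complex.ofReal_intCast]

theorem JJ_neg (w n : ℕ) (h k : ℤ) (hn : Even n) (hn' : Even (w - n)) :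
    JJ w n h (-k) = - JJ w n h k := by
  unfold JJ
  rw [← mul_neg, ← finsum_neg_distrib]
  congr 1
  let e : (ℤ × ℤ × ℤ × ℤ) ≃ (ℤ × ℤ × ℤ × ℤ) :=
    ⟨fun p => (p.1, - p.2.1, - p.2.2.1, p.2.2.2), fun p => (p.1, - p.2.1, - p.2.2.1, p.2.2.2),
      fun p => by simp, fun p => by simp⟩
  rw [← finsum_comp_equiv e]
  apply finsum_congr
  rintro ⟨a, b, c, d⟩
  have e1 : a * (-k) + (-b) * h = -(a * k + b * h) := by ring
  have e2 : (-c) * (-k) + d * h = c * k + d * h := by ring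
  have hmem : e (a, b, c, d) ∈ CC h (-k) ↔ (a, b, c, d) ∈ CC h k := by
    simp only [e, Equiv.coe_fn_mk, CC, Set.mem_ofPred_eq, e1, e2, abs_neg]
    have e3 : a * d - -b * -c = a * d - b * c := by ring
    have e4 : -(a * k + b * h) * a * ((c * k + d * h) * -c) =
      (a * k + b * h) * a * ((c * k + d * h) * c) := by ring
    rw [e3, e4, neg_ne_zero]
  have htm : tm w n h (-k) (e (a, b, c, d)) = - tm w n h k (a, b, c, d) := by
    simp only [e, Equiv.coe_fn_mk, tm, e1, e2]
    rw [neg_mul, Int.sign_neg]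
    push_cast
    rw [hn'.neg_pow]
    ring
  simp only [finsum_eq_if, hmem, htm]
  split_ifs <;> simp

def M1 (x : ℤ × ℤ × ℤ × ℤ) : ℤ × ℤ × ℤ × ℤ :=
  (x.2.2.1 + x.2.2.2, - x.2.2.2, x.1 + x.2.1, - x.2.1)
def M2 (x : ℤ × ℤ × ℤ × ℤ) : ℤ × ℤ × ℤ × ℤ :=
  (x.1 + x.2.1, - x.2.1, - (x.2.2.1 + x.2.2.2), x.2.2.2)

theorem SS_bounds {u v a b c d : ℤ} (hx : (a, b, c, d) ∈ SS u v) :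
    1 ≤ a ∧ 1 ≤ d ∧ a + b ≤ u + v ∧ c + d ≤ u + v := by
  obtain ⟨ha, hb, hc, hd, h1, h2, h3⟩ := hx
  simp only at *
  have ha1 : 1 ≤ a := by
    by_contra hcon
    have : a = 0 := by omega
    subst this
    nlinarith [mul_nonneg hb hc]
  have hd1 : 1 ≤ d := by
    by_contra hcon
    have : d = 0 := by omega
    subst this
    nlinarith [mul_nonneg hb hc]
  have e : u + v = (c + d) * (a * u - b * v) + (a + b) * (d * v - c * u) := by
    linear_combination (-(u + v)) * h1
  refine ⟨ha1, hd1, ?_, ?_⟩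
  · rw [e]
    nlinarith [mul_nonneg (add_nonneg hc hd) h2.le, mul_nonneg (add_nonneg ha hb) (show 0 ≤ (d * v - c * u) - 1 by omega)]
  · rw [e]
    nlinarith [mul_nonneg (add_nonneg ha hb) h3.le, mul_nonneg (add_nonneg hc hd) (show 0 ≤ (a * u - b * v) - 1 by omega)]

theorem CC_pos (h k : ℤ) (hh : 0 < h) (hk : 0 ≤ k) (hkh : k ≤ h) :
    CC h k ∩ {p | 0 < p.1} = M1 '' SS k (h - k) ∪ M2 '' SS k (h - k) := by
  ext ⟨a, b, c, d⟩
  constructor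
  · rintro ⟨⟨h1, ha, hc, hba, hah, hdc, hch, hlt⟩, hapos⟩
    simp only [Set.mem_ofPred_eq] at *
    rw [abs_of_pos hapos] at *
    have hb := abs_le.mp hba
    have hid : a * (c * k + d * h) - c * (a * k + b * h) = h := by linear_combination h * h1
    rcases lt_or_gt_of_ne hc with hc | hc
    · right
      rw [abs_of_neg hc] at *
      have hd := abs_le.mp hdc
      have hXY : 0 < (a * k + b * h) * (c * k + d * h) := by
        by_contra hcon
        push Not at hcon
        nlinarith [mul_nonneg_of_nonpos_of_nonpos hcon (mul_neg_of_pos_of_neg hapos hc).le]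
      have hX : 0 < a * k + b * h := by
        by_contra hcon
        push Not at hcon
        have : c * k + d * h ≤ 0 := by
          by_contra hcon2
          push Not at hcon2
          nlinarith [mul_nonneg (neg_nonneg.mpr hcon) hcon2.le]
        nlinarith [mul_nonneg hapos.le (neg_nonneg.mpr this), mul_nonneg (neg_nonneg.mpr hc.le) (neg_nonneg.mpr hcon)]
      have hY : 0 < c * k + d * h := by
        exact (pos_iff_pos_of_mul_pos hXY).mp hX
      have hd1 : 0 < d := by
        by_contra hcon
        push Not at hcon
        nlinarith [mul_nonneg (neg_nonneg.mpr hc.le) hk, mul_nonneg (neg_nonneg.mpr hcon) hh.le]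
      have hb1 : b ≤ 0 := by
        by_contra hcon
        push Not at hcon
        nlinarith [mul_pos hapos hd1, mul_pos hcon (neg_pos.mpr hc)]
      refine ⟨(a + b, -b, -c - d, d), ⟨?_, ?_, ?_, ?_, ?_, ?_, ?_⟩, ?_⟩
      · simp only; omega
      · simp only; omega
      · simp only; omega
      · simp only; omega
      · simp only; linarith
      · simp only; linarith
      · simp only; linarith
      · simp [M2]
    · left
      rw [abs_of_pos hc] at *
      have hd := abs_le.mp hdc
      have hXY : (a * k + b * h) * (c * k + d * h) < 0 := by
        by_contra hcon
        push Not at hcon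
        nlinarith [mul_nonneg hcon (mul_pos hapos hc).le]
      have hX : a * k + b * h < 0 := by
        by_contra hcon
        push Not at hcon
        have : c * k + d * h ≤ 0 := by
          by_contra hcon2
          push Not at hcon2
          nlinarith [mul_nonneg hcon hcon2.le]
        nlinarith [mul_nonneg hapos.le (neg_nonneg.mpr this), mul_nonneg hc.le hcon]
      have hY : 0 < c * k + d * h := by
        by_contra hcon
        push Not at hcon
        nlinarith [mul_nonneg (neg_nonneg.mpr hcon) (neg_nonneg.mpr hX.le)]
      have hb1 : b < 0 := by
        by_contra hcon
        push Not at hcon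
        nlinarith [mul_nonneg hapos.le hk, mul_nonneg hcon hh.le]
      have hd1 : d ≤ 0 := by
        by_contra hcon
        push Not at hcon
        nlinarith [mul_pos hapos hcon, mul_pos (neg_pos.mpr hb1) hc]
      refine ⟨(c + d, -d, a + b, -b), ⟨?_, ?_, ?_, ?_, ?_, ?_, ?_⟩, ?_⟩
      · simp only; omega
      · simp only; omega
      · simp only; omega
      · simp only; omega
      · simp only; linarith
      · simp only; linarith
      · simp only; linarith
      · simp [M1]
  · rintro (⟨⟨a', b', c', d'⟩, hx, he⟩ | ⟨⟨a', b', c', d'⟩, hx, he⟩)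
    · obtain ⟨hb1, hb2, hb3, hb4⟩ := SS_bounds hx
      obtain ⟨ha, hb, hc, hd, h1, h2, h3⟩ := hx
      simp only [M1, Prod.mk.injEq] at *
      obtain ⟨rfl, rfl, rfl, rfl⟩ := he
      have p1 : 0 < c' + d' := by omega
      have p2 : 0 < a' + b' := by omega
      refine ⟨⟨?_, ?_, ?_, ?_, ?_, ?_, ?_, ?_⟩, p1⟩
      all_goals simp only [abs_neg, abs_of_pos p1, abs_of_pos p2, abs_of_nonneg hb, abs_of_nonneg hd]
      · linarith
      · omega
      · omega
      · omega
      · omega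
      · omega
      · omega
      · have e1 : (c' + d') * k + -d' * h = -(d' * (h - k) - c' * k) := by ring
        have e2 : (a' + b') * k + -b' * h = (a' * k - b' * (h - k)) := by ring
        rw [e1, e2]
        nlinarith [mul_pos (mul_pos h2 p2) (mul_pos h3 p1)]
    · obtain ⟨hb1, hb2, hb3, hb4⟩ := SS_bounds hx
      obtain ⟨ha, hb, hc, hd, h1, h2, h3⟩ := hx
      simp only [M2, Prod.mk.injEq] at *
      obtain ⟨rfl, rfl, rfl, rfl⟩ := he
      have p1 : 0 < c' + d' := by omega
      have p2 : 0 < a' + b' := by omega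
      refine ⟨⟨?_, ?_, ?_, ?_, ?_, ?_, ?_, ?_⟩, p2⟩
      all_goals simp only [abs_neg, abs_of_pos p1, abs_of_pos p2, abs_of_nonneg hb, abs_of_nonneg hd]
      · linarith
      · omega
      · omega
      · omega
      · omega
      · omega
      · omega
      · have e1 : -(c' + d') * k + d' * h = (d' * (h - k) - c' * k) := by ring
        have e2 : (a' + b') * k + -b' * h = (a' * k - b' * (h - k)) := by ring
        rw [e1, e2]
        nlinarith [mul_pos (mul_pos h2 p2) (mul_pos h3 p1)]

theorem JJ_eq (w n : ℕ) (h k : ℤ) (hh : 0 < h) (hk : 0 ≤ k) (hkh : k ≤ h)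
    (hn : Even n) (hn' : Even (w - n)) (hf : (SS k (h - k)).Finite) :
    JJ w n h k = ∑ᶠ x ∈ SS k (h - k),
      (((x.1 * k - x.2.1 * (h - k) : ℤ) : ℂ) ^ (w - n) * ((x.2.2.2 * (h - k) - x.2.2.1 * k : ℤ) : ℂ) ^ n
      - ((x.2.2.2 * (h - k) - x.2.2.1 * k : ℤ) : ℂ) ^ (w - n) * ((x.1 * k - x.2.1 * (h - k) : ℤ) : ℂ) ^ n) := by
  have hC := CC_pos h k hh hk hkh
  have hfp : (CC h k ∩ {p | 0 < p.1}).Finite := by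
    rw [hC]; exact (hf.image _).union (hf.image _)
  have hneg : Set.BijOn (fun p : ℤ × ℤ × ℤ × ℤ => (-p.1, -p.2.1, -p.2.2.1, -p.2.2.2))
      (CC h k ∩ {p | 0 < p.1}) (CC h k ∩ {p | p.1 < 0}) := by
    have hm : ∀ a b c d : ℤ, (a, b, c, d) ∈ CC h k → (-a, -b, -c, -d) ∈ CC h k := by
      rintro a b c d ⟨h1, h2, h3, h4, h5, h6, h7, h8⟩
      simp only at *
      refine ⟨?_, ?_, ?_, ?_, ?_, ?_, ?_, ?_⟩
      all_goals simp only [abs_neg]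
      · linarith
      · omega
      · omega
      · exact h4
      · exact h5
      · exact h6
      · exact h7
      · linarith
    refine ⟨?_, ?_, ?_⟩
    · rintro ⟨a, b, c, d⟩ ⟨h1, h2⟩
      refine ⟨hm _ _ _ _ h1, ?_⟩
      simpa using h2
    · rintro ⟨a, b, c, d⟩ _ ⟨a', b', c', d'⟩ _ he
      simpa using he
    · rintro ⟨a, b, c, d⟩ ⟨h1, h2⟩
      refine ⟨(-a, -b, -c, -d), ⟨hm _ _ _ _ h1, ?_⟩, by simp⟩
      simpa using h2
  have hfn : (CC h k ∩ {p | p.1 < 0}).Finite := by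
    rw [← hneg.image_eq]; exact hfp.image _
  have hsplit : CC h k = (CC h k ∩ {p | 0 < p.1}) ∪ (CC h k ∩ {p | p.1 < 0}) := by
    ext ⟨a, b, c, d⟩
    constructor
    · intro hx
      rcases lt_or_gt_of_ne hx.2.1 with h' | h'
      · right; exact ⟨hx, h'⟩
      · left; exact ⟨hx, h'⟩
    · rintro (hx | hx) <;> exact hx.1
  have hd1 : Disjoint (CC h k ∩ {p | 0 < p.1}) (CC h k ∩ {p | p.1 < 0}) := by
    rw [Set.disjoint_left]
    rintro ⟨a, b, c, d⟩ ⟨_, h1⟩ ⟨_, h2⟩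
    simp only [Set.mem_ofPred_eq] at *
    omega
  have hs2 : ∑ᶠ p ∈ CC h k ∩ {p | p.1 < 0}, tm w n h k p = ∑ᶠ p ∈ CC h k ∩ {p | 0 < p.1}, tm w n h k p := by
    symm
    apply finsum_mem_eq_of_bijOn _ hneg
    rintro ⟨a, b, c, d⟩ _
    simp only [tm]
    have e1 : (-a) * k + (-b) * h = -(a * k + b * h) := by ring
    have e2 : (-c) * k + (-d) * h = -(c * k + d * h) := by ring
    rw [e1, e2, neg_mul_neg, Int.cast_neg, Int.cast_neg, hn.neg_pow, hn'.neg_pow]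
  have hM1 : Set.InjOn M1 (SS k (h - k)) := by
    rintro ⟨a, b, c, d⟩ _ ⟨a', b', c', d'⟩ _ he
    simp only [M1, Prod.mk.injEq] at he ⊢
    omega
  have hM2 : Set.InjOn M2 (SS k (h - k)) := by
    rintro ⟨a, b, c, d⟩ _ ⟨a', b', c', d'⟩ _ he
    simp only [M2, Prod.mk.injEq] at he ⊢
    omega
  have hd2 : Disjoint (M1 '' SS k (h - k)) (M2 '' SS k (h - k)) := by
    rw [Set.disjoint_left]
    rintro _ ⟨⟨a, b, c, d⟩, hx, rfl⟩ ⟨⟨a', b', c', d'⟩, hy, he⟩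
    simp only [M1, M2, Prod.mk.injEq] at he
    have := SS_bounds hx
    have := SS_bounds hy
    obtain ⟨_, _, _, _, _⟩ := hx
    obtain ⟨_, _, _, _, _⟩ := hy
    simp only at *
    omega
  unfold JJ
  rw [hsplit, finsum_mem_union hd1 hfp hfn, hs2, hC, finsum_mem_union hd2 (hf.image _) (hf.image _),
    finsum_mem_image hM1, finsum_mem_image hM2, finsum_mem_sub_distrib _ _ hf]
  have t1 : ∑ᶠ x ∈ SS k (h - k), tm w n h k (M1 x) = - ∑ᶠ x ∈ SS k (h - k), ((x.2.2.2 * (h - k) - x.2.2.1 * k : ℤ) : ℂ) ^ (w - n) * ((x.1 * k - x.2.1 * (h - k) : ℤ) : ℂ) ^ n := by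
    rw [← finsum_mem_neg_distrib _ hf]
    apply finsum_mem_congr rfl
    rintro ⟨a, b, c, d⟩ hx
    obtain ⟨hb1, hb2, hb3, hb4⟩ := SS_bounds hx
    obtain ⟨ha, hb, hc, hd, h1, h2, h3⟩ := hx
    simp only [tm, M1] at *
    have e1 : (c + d) * k + -d * h = -(d * (h - k) - c * k) := by ring
    have e2 : (a + b) * k + -b * h = (a * k - b * (h - k)) := by ring
    rw [e1, e2, Int.sign_eq_neg_one_of_neg, Int.cast_neg, Int.cast_neg, hn'.neg_pow]
    · push_cast; ring
    · nlinarith [mul_pos h3 (show 0 < c + d by omega)]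
  have t2 : ∑ᶠ x ∈ SS k (h - k), tm w n h k (M2 x) = ∑ᶠ x ∈ SS k (h - k), ((x.1 * k - x.2.1 * (h - k) : ℤ) : ℂ) ^ (w - n) * ((x.2.2.2 * (h - k) - x.2.2.1 * k : ℤ) : ℂ) ^ n := by
    apply finsum_mem_congr rfl
    rintro ⟨a, b, c, d⟩ hx
    obtain ⟨hb1, hb2, hb3, hb4⟩ := SS_bounds hx
    obtain ⟨ha, hb, hc, hd, h1, h2, h3⟩ := hx
    simp only [tm, M2] at *
    have e1 : -(c + d) * k + d * h = (d * (h - k) - c * k) := by ring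
    have e2 : (a + b) * k + -b * h = (a * k - b * (h - k)) := by ring
    rw [e1, e2, Int.sign_eq_one_of_pos]
    · push_cast; ring
    · exact mul_pos h2 (by omega)
  rw [t1, t2]
  ring
theorem mv_ext2 (p q : MvPolynomial (Fin 2) ℂ)
    (hpq : ∀ a b : ℤ, 0 < a → 0 < b → eval ![(a : ℂ), (b : ℂ)] p = eval ![(a : ℂ), (b : ℂ)] q) :
    p = q := by
  apply MvPolynomial.funext_set (fun _ => Set.range (fun n : ℕ => ((n : ℂ) + 1)))
  · intro i
    apply Set.infinite_range_of_injective
    intro a b hab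
    simpa using hab
  · intro x hx
    obtain ⟨a, ha⟩ := hx 0 trivial
    obtain ⟨b, hb⟩ := hx 1 trivial
    have : x = ![(((a : ℤ) + 1 : ℤ) : ℂ), (((b : ℤ) + 1 : ℤ) : ℂ)] := by
      funext i
      fin_cases i
      · simp [← ha]
      · simp [← hb]
    rw [this]
    exact hpq _ _ (by omega) (by omega)

theorem ev_bind (g p q : MvPolynomial (Fin 2) ℂ) (v : Fin 2 → ℂ) :
    eval v (bind₁ ![p, q] g) = eval ![eval v p, eval v q] g := by
  rw [eval, eval₂Hom_bind₁]
  congr 2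
  funext i
  fin_cases i <;> rfl

theorem ev_hom (g : MvPolynomial (Fin 2) ℂ) (w : ℕ) (hg : g.IsHomogeneous w) (t x y : ℂ) :
    eval ![t * x, t * y] g = t ^ w * eval ![x, y] g := by
  rw [eval_eq', eval_eq', Finset.mul_sum]
  apply Finset.sum_congr rfl
  intro d hd
  have h1 : d 0 + d 1 = w := by
    have := hg (mem_support_iff.mp hd)
    rw [Finsupp.weight_apply, Finsupp.sum_fintype _ _ (by simp)] at this
    simpa using this
  simp only [Fin.prod_univ_two, Matrix.cons_val_zero, Matrix.cons_val_one]
  rw [← h1, mul_pow, mul_pow, pow_add]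
  ring

noncomputable def gpol (g : MvPolynomial (Fin 2) ℂ) : Polynomial ℂ :=
  aeval ![(1 : Polynomial ℂ), Polynomial.X] g

theorem gpol_eval (g : MvPolynomial (Fin 2) ℂ) (y : ℂ) :
    (gpol g).eval y = eval ![1, y] g := by
  unfold gpol
  rw [aeval_def, eval₂_eq', Polynomial.eval_finsetSum, eval_eq']
  apply Finset.sum_congr rfl
  intro d _
  simp [Fin.prod_univ_two]

theorem gpol_deg (g : MvPolynomial (Fin 2) ℂ) (w : ℕ) (hg : g.IsHomogeneous w) :
    (gpol g).natDegree ≤ w := by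
  unfold gpol
  rw [aeval_def, eval₂_eq']
  apply Polynomial.natDegree_sum_le_of_forall_le
  intro d hd
  have h1 : d 0 + d 1 = w := by
    have := hg (mem_support_iff.mp hd)
    rw [Finsupp.weight_apply, Finsupp.sum_fintype _ _ (by simp)] at this
    simpa using this
  simp only [Fin.prod_univ_two, Matrix.cons_val_zero, Matrix.cons_val_one, one_pow, one_mul]
  refine (Polynomial.natDegree_C_mul_X_pow_le _ _).trans (by omega)

theorem poly_zero (D : Polynomial ℂ) (hD : ∀ N : ℕ, D.eval (N : ℂ) = 0) : D = 0 := by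
  apply Polynomial.eq_of_infinite_eval_eq
  apply Set.Infinite.mono (s := Set.range (fun n : ℕ => (n : ℂ)))
  · rintro _ ⟨n, rfl⟩
    simp [hD n]
  · exact Set.infinite_range_of_injective Nat.cast_injective

theorem g_odd (w : ℕ) (hw : Even w) (hw0 : 0 < w) (g : MvPolynomial (Fin 2) ℂ)
    (hg : g.IsHomogeneous w)
    (hs : ∀ x y : ℂ, eval ![x, y] g = eval ![y, x] g)
    (h3 : ∀ x y : ℂ, eval ![x, y] g = eval ![x, x + y] g + eval ![y, x + y] g) (x y : ℂ) :
    eval ![x, -y] g = - eval ![x, y] g := by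
  have hneg : ∀ x y : ℂ, eval ![-x, -y] g = eval ![x, y] g := by
    intro x y
    have := ev_hom g w hg (-1) x y
    rw [hw.neg_one_pow] at this
    simpa using this
  have hH : ∀ x y : ℂ, eval ![x, y] g + eval ![x, -y] g =
      eval ![x - y, y] g + eval ![x - y, -y] g := by
    intro x y
    have a1 := h3 x (-y)
    have a2 := h3 (x - y) y
    rw [sub_add_cancel] at a2
    rw [← sub_eq_add_neg] at a1
    have a3 := hneg (x - y) (-y)
    have a4 := hs (x - y) (-y)
    have a5 := hs (x - y) x
    have a6 := hs x y
    linear_combination a1 + a6 - a5 - a2 - a4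
  set D : Polynomial ℂ := (gpol g) + (gpol g).comp (-Polynomial.X) - Polynomial.C (2 * eval ![1, 0] g) with hDdef
  have hD : D = 0 := by
    apply poly_zero
    intro N
    induction N with
    | zero => simp [D, gpol_eval]; ring
    | succ N ih =>
      simp only [D, Polynomial.eval_sub, Polynomial.eval_add, Polynomial.eval_comp,
        Polynomial.eval_neg, Polynomial.eval_X, Polynomial.eval_C, gpol_eval] at ih ⊢
      have a1 := hH ((N : ℂ) + 1) 1
      rw [add_sub_cancel_right] at a1
      have a2 := hs 1 ((N : ℂ) + 1)
      have a3 := hs 1 (-((N : ℂ) + 1))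
      have a4 := hneg ((N : ℂ) + 1) (-1)
      have a5 := hs 1 (N : ℂ)
      have a6 := hs 1 (-(N : ℂ))
      have a7 := hneg (N : ℂ) (-1)
      rw [neg_neg] at a4 a7
      push_cast
      linear_combination ih + a1 + a2 + a3 + a4 - a5 - a6 - a7
  have hDe : ∀ y : ℂ, eval ![1, y] g + eval ![1, -y] g = 2 * eval ![1, 0] g := by
    intro y
    have := congrArg (Polynomial.eval y) hD
    simp only [D, Polynomial.eval_sub, Polynomial.eval_add, Polynomial.eval_comp,
        Polynomial.eval_neg, Polynomial.eval_X, Polynomial.eval_C, gpol_eval, Polynomial.eval_zero] at this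
    linear_combination this
  have h10 : eval ![1, 0] g = 0 := by
    have b1 := hDe 2
    have b2 := hDe (1/2)
    have b3 := ev_hom g w hg 2 1 (1/2)
    have b4 := ev_hom g w hg 2 1 (-(1/2))
    norm_num at b3 b4 b2
    have b5 := hs 2 1
    have b6 := hs 2 (-1)
    have b7 := hneg 1 (-2)
    rw [neg_neg] at b7
    have : ((2 : ℂ) ^ w - 1) * (2 * eval ![1, 0] g) = 0 := by
      linear_combination b1 - (2 : ℂ) ^ w * b2 - b3 - b4 + b5 + b6 + b7
    rcases mul_eq_zero.mp this with h | h
    · exfalso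
      have h' : (2 : ℂ) ^ w = 1 := by linear_combination h
      have h'' : (2 : ℕ) ^ w = 1 := by exact_mod_cast h'
      have := Nat.one_lt_two_pow hw0.ne'
      omega
    · simpa using h
  by_cases hx : x = 0
  · subst hx
    by_cases hy : y = 0
    · subst hy
      have := ev_hom g w hg 0 0 0
      rw [zero_pow hw0.ne'] at this
      simp only [mul_zero, zero_mul] at this
      simp [this]
    · have a := ev_hom g w hg y 1 0
      have b := ev_hom g w hg (-y) 1 0
      simp only [mul_one, mul_zero, h10] at a b
      rw [hs, b, hs, a]; simp
  · have a := ev_hom g w hg x 1 (y / x)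
    have b := ev_hom g w hg x 1 (-(y / x))
    rw [mul_neg, mul_div_cancel₀ _ hx, mul_one] at b
    rw [mul_div_cancel₀ _ hx, mul_one] at a
    rw [a, b]
    linear_combination x ^ w * hDe (y / x) + 2 * x ^ w * h10
noncomputable def PPol (g : MvPolynomial (Fin 2) ℂ) : Polynomial ℂ :=
  Polynomial.C (1 / 3) * ((gpol g).comp (1 - Polynomial.X) + (gpol g).comp (1 + Polynomial.X))

theorem PPol_eval (g : MvPolynomial (Fin 2) ℂ) (y : ℂ) :
    (PPol g).eval y = (eval ![1, 1 - y] g + eval ![1, 1 + y] g) / 3 := by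
  simp [PPol, gpol_eval]; ring

theorem PPol_deg (g : MvPolynomial (Fin 2) ℂ) (w : ℕ) (hg : g.IsHomogeneous w) :
    (PPol g).natDegree ≤ w := by
  have hd := gpol_deg g w hg
  have d1 : (1 - Polynomial.X : Polynomial ℂ).natDegree ≤ 1 := by compute_degree
  have d2 : (1 + Polynomial.X : Polynomial ℂ).natDegree ≤ 1 := by compute_degree
  refine (Polynomial.natDegree_C_mul_le _ _).trans (Polynomial.natDegree_add_le_of_degree_le ?_ ?_)
  · refine Polynomial.natDegree_comp_le.trans ?_
    exact (Nat.mul_le_mul hd d1).trans (by omega)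
  · refine Polynomial.natDegree_comp_le.trans ?_
    exact (Nat.mul_le_mul hd d2).trans (by omega)

theorem PPol_sum (g : MvPolynomial (Fin 2) ℂ) (w : ℕ) (hg : g.IsHomogeneous w) (x y : ℂ)
    (hx : x ≠ 0) :
    (eval ![x, x - y] g + eval ![x, x + y] g) / 3 =
      ∑ n ∈ Finset.range (w + 1), (PPol g).coeff n * (x ^ (w - n) * y ^ n) := by
  have a := ev_hom g w hg x 1 (1 - y / x)
  have b := ev_hom g w hg x 1 (1 + y / x)
  have e1 : x * (1 - y / x) = x - y := by field_simp
  have e2 : x * (1 + y / x) = x + y := by field_simp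
  rw [mul_one, e1] at a
  rw [mul_one, e2] at b
  have c := PPol_eval g (y / x)
  rw [Polynomial.eval_eq_sum_range' (Nat.lt_succ_of_le (PPol_deg g w hg))] at c
  rw [a, b, ← mul_add, mul_div_assoc, ← c, Finset.mul_sum]
  apply Finset.sum_congr rfl
  intro n hn
  have hn : n ≤ w := by simp at hn; omega
  rw [div_pow]
  have : x ^ w = x ^ (w - n) * x ^ n := by rw [← pow_add]; congr 1; omega
  rw [this]
  field_simp

theorem coeff_odd (g : MvPolynomial (Fin 2) ℂ) (n : ℕ) (hn : Odd n) : (PPol g).coeff n = 0 := by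
  have h1 : (PPol g).comp (Polynomial.C (-1) * Polynomial.X) = PPol g := by
    apply Polynomial.funext
    intro r
    rw [Polynomial.eval_comp, PPol_eval, PPol_eval]
    simp
    ring_nf
  have h2 := congrArg (fun p => Polynomial.coeff p n) h1
  simp only [Polynomial.comp_C_mul_X_coeff, hn.neg_one_pow] at h2
  rw [mul_neg_one] at h2
  exact self_eq_neg.mp h2.symm

theorem coeff_anti (g : MvPolynomial (Fin 2) ℂ) (w : ℕ) (hg : g.IsHomogeneous w)
    (hP : ∀ x y : ℂ, (eval ![x, x - y] g + eval ![x, x + y] g) / 3 =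
      - ((eval ![y, y - x] g + eval ![y, y + x] g) / 3)) (n : ℕ) (hn : n ≤ w) :
    (PPol g).coeff (w - n) = - (PPol g).coeff n := by
  set Q : Polynomial ℂ := ∑ n ∈ Finset.range (w + 1), Polynomial.monomial n ((PPol g).coeff (w - n)) with hQ
  have hQc : ∀ n ≤ w, Q.coeff n = (PPol g).coeff (w - n) := by
    intro n hn
    rw [hQ, Polynomial.finsetSum_coeff]
    simp only [Polynomial.coeff_monomial]
    rw [Finset.sum_ite_eq' (Finset.range (w + 1)) n]
    simp [Nat.lt_succ_of_le hn]
  have hQe : Q = - PPol g := by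
    apply Polynomial.eq_of_infinite_eval_eq
    apply Set.Infinite.mono (s := Set.range (fun n : ℕ => ((n : ℂ) + 1)))
    · rintro _ ⟨N, rfl⟩
      set t : ℂ := (N : ℂ) + 1 with ht
      have ht0 : t ≠ 0 := Nat.cast_add_one_ne_zero N
      have h1 := hP t 1
      rw [PPol_sum g w hg t 1 ht0] at h1
      have h2 := PPol_eval g t
      show Q.eval t = (- PPol g).eval t
      rw [Polynomial.eval_neg, h2, ← h1, hQ, Polynomial.eval_finsetSum,
        ← Finset.sum_range_reflect]
      apply Finset.sum_congr rfl
      intro j hj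
      have hj : j ≤ w := by simp at hj; omega
      rw [Polynomial.eval_monomial]
      have e1 : w + 1 - 1 - j = w - j := by omega
      rw [e1, Nat.sub_sub_self hj]
      simp
    · apply Set.infinite_range_of_injective
      intro a b hab
      simpa using hab
  rw [← hQc n hn, hQe, Polynomial.coeff_neg]

theorem bern_id (w : ℕ) (g : MvPolynomial (Fin 2) ℂ) (s : Finset ℕ) (c : ℕ → ℂ)
    (hs : ∀ n ∈ s, 0 < n ∧ Even n)
    (h0 : eval ![1, 1] g = 0) (h10 : eval ![1, 0] g = 0)
    (hodd : ∀ x y : ℂ, eval ![x, -y] g = - eval ![x, y] g)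
    (hP : ∀ y : ℂ, (eval ![1, 1 - y] g + eval ![1, 1 + y] g) / 3 = ∑ n ∈ s, c n * y ^ n) (q : ℚ) :
    (eval ![1, 1 - (q : ℂ)] g - eval ![1, (q : ℂ)] g) / 3 =
      - ∑ n ∈ s, c n * ((((Polynomial.bernoulli (n + 1)).eval q : ℚ) : ℂ) / ((n : ℂ) + 1)) := by
  set D : Polynomial ℂ := Polynomial.C (1 / 3) * ((gpol g).comp (1 - Polynomial.X) - gpol g) +
    ∑ n ∈ s, Polynomial.C (c n / ((n : ℂ) + 1)) *
      (Polynomial.bernoulli (n + 1)).map (algebraMap ℚ ℂ) with hD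
  have hDe : ∀ q : ℚ, D.eval (q : ℂ) = (eval ![1, 1 - (q : ℂ)] g - eval ![1, (q : ℂ)] g) / 3 +
      ∑ n ∈ s, c n * ((((Polynomial.bernoulli (n + 1)).eval q : ℚ) : ℂ) / ((n : ℂ) + 1)) := by
    intro q
    rw [hD, Polynomial.eval_add, Polynomial.eval_finsetSum]
    congr 1
    · simp [gpol_eval]; ring
    · apply Finset.sum_congr rfl
      intro n _
      have : (q : ℂ) = algebraMap ℚ ℂ q := rfl
      rw [Polynomial.eval_mul, Polynomial.eval_C, this, Polynomial.eval_map_algebraMap,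
        Polynomial.aeval_algebraMap_apply]
      simp
      ring
  have hD0 : D = 0 := by
    apply poly_zero
    intro N
    induction N with
    | zero =>
      have := hDe 0
      rw [Rat.cast_zero] at this
      rw [Nat.cast_zero, this, sub_zero, h0, h10]
      simp only [sub_self, zero_div, zero_add]
      apply Finset.sum_eq_zero
      intro n hn
      rw [Polynomial.bernoulli_eval_zero, bernoulli_eq_zero_of_odd ((hs n hn).2.add_one)
        (by have := (hs n hn).1; omega)]
      simp
    | succ N ih =>
      have a1 := hDe (N : ℚ)
      have a2 := hDe (1 + (N : ℚ))
      rw [Rat.cast_natCast] at a1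
      rw [Rat.cast_add, Rat.cast_one, Rat.cast_natCast] at a2
      rw [ih] at a1
      have e : (((N + 1 : ℕ)) : ℂ) = 1 + (N : ℂ) := by push_cast; ring
      rw [e, a2]
      have a3 : ∑ n ∈ s, c n * ((((Polynomial.bernoulli (n + 1)).eval (1 + (N : ℚ)) : ℚ) : ℂ) / ((n : ℂ) + 1)) =
          ∑ n ∈ s, c n * ((((Polynomial.bernoulli (n + 1)).eval (N : ℚ) : ℚ) : ℂ) / ((n : ℂ) + 1)) +
          ∑ n ∈ s, c n * (N : ℂ) ^ n := by
        rw [← Finset.sum_add_distrib]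
        apply Finset.sum_congr rfl
        intro n _
        rw [Polynomial.bernoulli_eval_one_add]
        have : (n : ℂ) + 1 ≠ 0 := Nat.cast_add_one_ne_zero n
        push_cast
        field_simp
      rw [a3]
      have a4 := hP N
      have a5 := hodd 1 N
      have e2 : (1 : ℂ) - (1 + (N : ℂ)) = -(N : ℂ) := by ring
      rw [e2]
      linear_combination -a1 - a4 + (1 / 3) * a5
  have := hDe q
  rw [hD0, Polynomial.eval_zero] at this
  linear_combination -this

theorem Bbar_shift (m : ℕ) (h k j : ℤ) (hh : 0 < h) :
    Bbar m (((k - j * h : ℤ) : ℚ) / h) = Bbar m ((k : ℚ) / h) := by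
  have hh' : (h : ℚ) ≠ 0 := by exact_mod_cast hh.ne'
  have : ((k - j * h : ℤ) : ℚ) / h = (k : ℚ) / h - j := by push_cast; field_simp
  rw [this]
  unfold Bbar
  rw [Int.floor_sub_intCast]
  congr 2
  push_cast; ring

theorem Bbar_neg (m : ℕ) (hm : Odd m) (hm1 : 1 < m) (x : ℚ) : Bbar m (-x) = - Bbar m x := by
  unfold Bbar
  by_cases hx : Int.fract x = 0
  · have h2 : Int.fract (-x) = 0 := Int.fract_neg_eq_zero.mpr hx
    change (((Polynomial.bernoulli m).eval (Int.fract (-x)) : ℚ) : ℂ) = -(((Polynomial.bernoulli m).eval (Int.fract x) : ℚ) : ℂ)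
    rw [hx, h2, Polynomial.bernoulli_eval_zero, bernoulli_eq_zero_of_odd hm hm1]
    simp
  · change (((Polynomial.bernoulli m).eval (Int.fract (-x)) : ℚ) : ℂ) = -(((Polynomial.bernoulli m).eval (Int.fract x) : ℚ) : ℂ)
    rw [Int.fract_neg hx, Polynomial.bernoulli_eval_one_sub, hm.neg_one_pow]
    push_cast; ring

theorem Bbar_small (m : ℕ) (h k : ℤ) (hk : 0 ≤ k) (hkh : k < h) :
    Bbar m ((k : ℚ) / h) = (((Polynomial.bernoulli m).eval ((k : ℚ) / h) : ℚ) : ℂ) := by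
  have hh' : (0 : ℚ) < h := by exact_mod_cast (lt_of_le_of_lt hk hkh)
  have : ⌊(k : ℚ) / h⌋ = 0 := by
    rw [Int.floor_eq_zero_iff]
    refine ⟨div_nonneg (by exact_mod_cast hk) hh'.le, ?_⟩
    rw [div_lt_one hh']
    exact_mod_cast hkh
  unfold Bbar
  rw [this]; simp

theorem odd_small (w : ℕ) (hw : Even w) (hw0 : 0 < w)
    (E : ℤ → ℤ → ℂ) (hE : ∀ h k : ℤ, 0 < h → E h (k + h) = E h k)
    (hodd : ∀ h k : ℤ, 0 < h → E h (-k) = -E h k)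
    (g : MvPolynomial (Fin 2) ℂ) (hg : g.IsHomogeneous w)
    (hrec : ∀ h k : ℤ, 0 < h → 0 < k →
      E h k - E k (-h) = eval ![(h : ℂ), (k : ℂ)] g) :
    ∃ c : ℕ → ℂ, ∀ h k : ℤ, 0 < h → 0 ≤ k → k < h →
      E h k = ∑ n ∈ (Finset.range w).filter (fun n => 0 < n ∧ Even n),
        c n * (JJ w n h k + Bbar (n + 1) ((k : ℚ) / h) / ((n : ℂ) + 1) * (h : ℂ) ^ w
    - Bbar (w - n + 1) ((k : ℚ) / h) / (((w - n : ℕ) : ℂ) + 1) * (h : ℂ) ^ w) := by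
  have hE0 : ∀ h : ℤ, 0 < h → E h 0 = 0 := by
    intro h hh
    have := hodd h 0 hh
    rw [neg_zero] at this
    exact self_eq_neg.mp this
  have hr : ∀ h k : ℤ, 0 < h → 0 < k → eval ![(h : ℂ), (k : ℂ)] g = E h k + E k h := by
    intro h k hh hk
    rw [← hrec h k hh hk, hodd k h hk]; ring
  -- symmetry
  have hs : ∀ x y : ℂ, eval ![x, y] g = eval ![y, x] g := by
    have : g = bind₁ ![X 1, X 0] g := by
      apply mv_ext2
      intro a b ha hb
      rw [ev_bind]
      simp only [eval_X, Matrix.cons_val_zero, Matrix.cons_val_one]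
      rw [hr a b ha hb, hr b a hb ha]; ring
    intro x y
    conv_lhs => rw [this]
    rw [ev_bind]
    simp
  have h3 : ∀ x y : ℂ, eval ![x, y] g = eval ![x, x + y] g + eval ![y, x + y] g := by
    have : g = bind₁ ![X 0, X 0 + X 1] g + bind₁ ![X 1, X 0 + X 1] g := by
      apply mv_ext2
      intro a b ha hb
      rw [map_add, ev_bind, ev_bind]
      simp only [map_add, eval_X, Matrix.cons_val_zero, Matrix.cons_val_one]
      have r1 := hr a b ha hb
      have r2 := hr a (a + b) ha (by omega)
      have r3 := hr b (a + b) hb (by omega)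
      push_cast at r2 r3
      rw [r1, r2, r3]
      have s1 : E a (a + b) = E a b := by rw [add_comm]; exact hE a b ha
      have s2 : E b (a + b) = E b a := hE b a hb
      have s3 : E (a + b) a = - E (a + b) b := by
        rw [← hodd _ _ (by omega), ← hE (a + b) (-b) (by omega)]
        congr 1; ring
      rw [s1, s2, s3]; ring
    intro x y
    conv_lhs => rw [this]
    rw [map_add, ev_bind, ev_bind]
    simp
  have hgo := g_odd w hw hw0 g hg hs h3
  have hneg : ∀ x y : ℂ, eval ![-x, -y] g = eval ![x, y] g := by
    intro x y
    have := ev_hom g w hg (-1) x y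
    rw [hw.neg_one_pow] at this
    simpa using this
  have hxx : ∀ x : ℂ, eval ![x, x] g = 0 := by
    intro x
    have := h3 x 0
    rw [add_zero] at this
    have h2 := hs 0 x
    have h4 := hgo x 0
    rw [neg_zero] at h4
    have h5 : eval ![x, 0] g = 0 := self_eq_neg.mp h4
    linear_combination -this - h2
  have hx0 : ∀ x : ℂ, eval ![x, 0] g = 0 := by
    intro x
    have h4 := hgo x 0
    rw [neg_zero] at h4
    exact self_eq_neg.mp h4
  have hP : ∀ x y : ℂ, (eval ![x, x - y] g + eval ![x, x + y] g) / 3 =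
      - ((eval ![y, y - x] g + eval ![y, y + x] g) / 3) := by
    intro x y
    have a1 := h3 (x - y) y
    rw [sub_add_cancel] at a1
    have a2 := h3 x y
    have a3 := hs (x - y) x
    have a4 := hs y x
    have a5 := hgo y (x - y)
    have a6 := hs y (x - y)
    rw [neg_sub] at a5
    rw [add_comm y x]
    linear_combination (1/3) * (a5 - a1 - a2 - a3 - a4 - a6)
  -- coefficients
  set c : ℕ → ℂ := fun n => (PPol g).coeff n with hc
  have hco : ∀ n, Odd n → c n = 0 := fun n hn => coeff_odd g n hn
  have hca : ∀ n ≤ w, c (w - n) = - c n := fun n hn => coeff_anti g w hg hP n hn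
  have hc0 : c 0 = 0 := by
    have := PPol_eval g 0
    rw [sub_zero, add_zero, hxx 1, ← Polynomial.coeff_zero_eq_eval_zero] at this
    simpa using this
  have hcw : c w = 0 := by
    have := hca 0 (by omega)
    rw [hc0] at this
    simpa using this
  set s : Finset ℕ := (Finset.range w).filter (fun n => 0 < n ∧ Even n) with hsdef
  have hsm : ∀ n, n ∈ s ↔ n < w ∧ 0 < n ∧ Even n := by
    intro n; simp [hsdef]
  have hsum : ∀ f : ℕ → ℂ, ∑ n ∈ Finset.range (w + 1), c n * f n = ∑ n ∈ s, c n * f n := by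
    intro f
    symm
    apply Finset.sum_subset
    · intro n hn
      have := (hsm n).mp hn
      simp; omega
    · intro n hn hn2
      rw [hsm] at hn2
      have hn : n ≤ w := by simp at hn; omega
      have : c n = 0 := by
        rcases Nat.even_or_odd n with he | ho
        · rcases Nat.eq_zero_or_pos n with h0 | h0
          · rw [h0, hc0]
          · rcases hn.lt_or_eq with h1 | h1
            · exact absurd ⟨h1, h0, he⟩ hn2
            · rw [h1, hcw]
        · exact hco n ho
      rw [this, zero_mul]
  have hflip : ∀ f : ℕ → ℂ, ∑ n ∈ s, c n * f (w - n) = - ∑ n ∈ s, c n * f n := by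
    intro f
    rw [← hsum f, ← hsum (fun n => f (w - n)), ← Finset.sum_range_reflect, ← Finset.sum_neg_distrib]
    apply Finset.sum_congr rfl
    intro j hj
    have hj : j ≤ w := by simp at hj; omega
    have e1 : w + 1 - 1 - j = w - j := by omega
    rw [e1, Nat.sub_sub_self hj, hca j hj]; ring
  have hPs : ∀ x y : ℂ, x ≠ 0 → (eval ![x, x - y] g + eval ![x, x + y] g) / 3 =
      ∑ n ∈ s, c n * (x ^ (w - n) * y ^ n) := by
    intro x y hx
    rw [PPol_sum g w hg x y hx, ← hsum]
  have hB := bern_id w g s c (fun n hn => ((hsm n).mp hn).2) (hxx 1) (hx0 1) hgo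
    (fun y => by rw [hPs 1 y one_ne_zero]; simp)
  -- F
  set p : ℤ → ℤ → ℂ := fun h k =>
    (eval ![(h : ℂ), ((h - k : ℤ) : ℂ)] g - eval ![(h : ℂ), (k : ℂ)] g) / 3 with hp
  set F : ℤ → ℤ → ℂ := fun u v => E (u + v) u + p (u + v) u with hF
  set P : ℤ → ℤ → ℂ := fun x y =>
    (eval ![(x : ℂ), (x : ℂ) - y] g + eval ![(x : ℂ), (x : ℂ) + y] g) / 3 with hPdef
  have hF0 : ∀ v, 0 < v → F 0 v = 0 := by
    intro v hv
    simp only [hF, hp, zero_add, sub_zero, hE0 v hv, Int.cast_zero, hxx, hx0]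
    simp
  have hFs : ∀ u v, 0 ≤ u → 0 ≤ v → 0 < u + v → F u v = - F v u := by
    intro u v hu hv huv
    have s3 : E (u + v) u = - E (u + v) v := by
      rw [← hodd _ _ huv, ← hE (u + v) (-v) huv]
      congr 1; ring
    simp only [hF, hp]
    rw [add_comm v u, s3]
    have e1 : u + v - u = v := by ring
    have e2 : u + v - v = u := by ring
    rw [e1, e2]; ring
  have hPa : ∀ u v, 0 < u → 0 < v → P u v = - P v u := by
    intro u v _ _
    exact hP u v
  have hFr : ∀ u v, 0 < u → u < v → F u v = P u v + F u (v - u) := by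
    intro u v hu huv
    rw [hPa u v hu (by omega)]
    simp only [hF, hp, hPdef]
    have e1 : u + v - u = v := by ring
    have e2 : u + (v - u) = v := by ring
    rw [e1, e2]
    have r1 := hr u v hu (by omega)
    have r2 := hr u (u + v) hu (by omega)
    have s1 : E u (u + v) = E u v := by rw [add_comm]; exact hE u v hu
    rw [s1] at r2
    have t1 := h3 u v
    have t2 := hs u (u + v)
    have t3 := hs v (u + v)
    have t4 := hs u v
    have t5 : (v : ℂ) + u = u + v := by ring
    push_cast at *
    rw [t5]
    linear_combination (-1 : ℂ) * r2 + r1 - (2/3) * t1 + (1/3) * t2 - (1/3) * t3 - (1/3) * t4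
  refine ⟨fun n => c n / 2, ?_⟩
  intro h k hh hk hkh
  have hhC : (h : ℂ) ≠ 0 := by exact_mod_cast hh.ne'
  obtain ⟨hf, hsumF⟩ := SS_sum F P hF0 hFs hPa hFr (h.toNat) k (h - k) hk (by omega) (by omega) (by omega)
  have hEF : E h k = F k (h - k) - p h k := by
    simp only [hF]
    have : k + (h - k) = h := by ring
    rw [this]; ring
  -- Bernoulli part
  have hpB : p h k = - ∑ n ∈ s, c n * (Bbar (n + 1) ((k : ℚ) / h) / ((n : ℂ) + 1) * (h : ℂ) ^ w) := by
    have b1 := hB ((k : ℚ) / h)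
    have a := ev_hom g w hg h 1 (1 - (k : ℂ) / h)
    have b := ev_hom g w hg h 1 ((k : ℂ) / h)
    have e1 : (h : ℂ) * (1 - k / h) = h - k := by field_simp
    have e2 : (h : ℂ) * (k / h) = k := by field_simp
    rw [mul_one, e1] at a
    rw [mul_one, e2] at b
    simp only [hp]
    push_cast at b1 ⊢
    rw [a, b, ← mul_sub, mul_div_assoc, b1, mul_neg, Finset.mul_sum]
    congr 1
    apply Finset.sum_congr rfl
    intro n _
    rw [Bbar_small (n + 1) h k hk hkh]
    ring
  have hJ : F k (h - k) = ∑ n ∈ s, (c n / 2) * JJ w n h k := by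
    rw [← hsumF, finsum_mem_eq_finite_toFinset_sum _ hf]
    have : ∀ n ∈ s, (c n / 2) * JJ w n h k = ∑ x ∈ hf.toFinset, (c n / 2) *
      (((x.1 * k - x.2.1 * (h - k) : ℤ) : ℂ) ^ (w - n) * ((x.2.2.2 * (h - k) - x.2.2.1 * k : ℤ) : ℂ) ^ n
      - ((x.2.2.2 * (h - k) - x.2.2.1 * k : ℤ) : ℂ) ^ (w - n) * ((x.1 * k - x.2.1 * (h - k) : ℤ) : ℂ) ^ n) := by
      intro n hn
      obtain ⟨h1, h2, h3⟩ := (hsm n).mp hn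
      have hwn : Even (w - n) := by
        rw [Nat.even_sub h1.le]; exact ⟨fun _ => h3, fun _ => hw⟩
      rw [JJ_eq w n h k hh hk hkh.le h3 hwn hf, finsum_mem_eq_finite_toFinset_sum _ hf, Finset.mul_sum]
    rw [Finset.sum_congr rfl this, Finset.sum_comm]
    apply Finset.sum_congr rfl
    rintro ⟨a, b, c', d⟩ hx
    rw [Set.Finite.mem_toFinset] at hx
    obtain ⟨-, -, -, -, -, hL, hR⟩ := hx
    simp only at hL hR ⊢
    generalize a * k - b * (h - k) = L at *
    generalize d * (h - k) - c' * k = R at *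
    have hLC : (L : ℂ) ≠ 0 := by exact_mod_cast hL.ne'
    simp only [hPdef]
    rw [hPs L R hLC]
    have f1 := hflip (fun n => (L : ℂ) ^ (w - n) * (R : ℂ) ^ n)
    have f2 : ∑ n ∈ s, c n * ((L : ℂ) ^ (w - (w - n)) * (R : ℂ) ^ (w - n)) =
        ∑ n ∈ s, c n * ((R : ℂ) ^ (w - n) * (L : ℂ) ^ n) := by
      apply Finset.sum_congr rfl
      intro n hn
      rw [Nat.sub_sub_self ((hsm n).mp hn).1.le]; ring
    have f3 : ∑ n ∈ s, (c n / 2) * ((L : ℂ) ^ (w - n) * (R : ℂ) ^ n - (R : ℂ) ^ (w - n) * (L : ℂ) ^ n) =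
        (1 / 2) * ∑ n ∈ s, c n * ((L : ℂ) ^ (w - n) * (R : ℂ) ^ n) -
        (1 / 2) * ∑ n ∈ s, c n * ((R : ℂ) ^ (w - n) * (L : ℂ) ^ n) := by
      rw [Finset.mul_sum, Finset.mul_sum, ← Finset.sum_sub_distrib]
      apply Finset.sum_congr rfl
      intro n _
      ring
    rw [f3, ← f2, f1]
    ring
  have f1 := hflip (fun n => Bbar (n + 1) ((k : ℚ) / h) / ((n : ℂ) + 1) * (h : ℂ) ^ w)
  have f3 : ∑ n ∈ s, (c n / 2) * (JJ w n h k + Bbar (n + 1) ((k : ℚ) / h) / ((n : ℂ) + 1) * (h : ℂ) ^ w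
    - Bbar (w - n + 1) ((k : ℚ) / h) / (((w - n : ℕ) : ℂ) + 1) * (h : ℂ) ^ w) =
      ∑ n ∈ s, (c n / 2) * JJ w n h k +
      (1 / 2) * ∑ n ∈ s, c n * (Bbar (n + 1) ((k : ℚ) / h) / ((n : ℂ) + 1) * (h : ℂ) ^ w) -
      (1 / 2) * ∑ n ∈ s, c n * (Bbar (w - n + 1) ((k : ℚ) / h) / (((w - n : ℕ) : ℂ) + 1) * (h : ℂ) ^ w) := by
    rw [Finset.mul_sum, Finset.mul_sum, ← Finset.sum_add_distrib, ← Finset.sum_sub_distrib]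
    apply Finset.sum_congr rfl
    intro n _
    ring
  rw [f3, f1, hEF, hJ, hpB]
  ring

/-- An odd weighted Dedekind symbol of weight `w` with polynomial reciprocity function
is a linear combination of the symbols `E_{w,n}` for even `n`, `0 < n < w`. -/
theorem odd_symbol_linear_combination (w : ℕ) (hw : Even w) (hw0 : 0 < w)
    (E : ℤ → ℤ → ℂ) (hE : IsDedekindSymbol w E)
    (hodd : ∀ h k : ℤ, 0 < h → E h (-k) = -E h k)
    (g : MvPolynomial (Fin 2) ℂ) (hg : g.IsHomogeneous w)
    (hrec : ∀ h k : ℤ, 0 < h → 0 < k →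
      E h k - E k (-h) = eval ![(h : ℂ), (k : ℂ)] g) :
    ∃ c : ℕ → ℂ, ∀ h k : ℤ, 0 < h →
      E h k = ∑ n ∈ (Finset.range w).filter (fun n => 0 < n ∧ Even n),
        c n * EwnEven w n h k := by
  obtain ⟨c, hc⟩ := odd_small w hw hw0 E hE.1 hodd g hg hrec
  refine ⟨c, ?_⟩
  intro h k hh
  have hper : ∀ (h k : ℤ), 0 < h → ∀ j : ℤ, E h (k - j * h) = E h k := by
    intro h k hh j
    induction j using Int.induction_on with
    | zero => simp
    | succ i ih =>
      rw [← ih, ← hE.1 h _ hh]; congr 1; ring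
    | pred i ih =>
      rw [← ih, ← hE.1 h (k - -(i : ℤ) * h) hh]; congr 1; ring
  set m := ⌊(k : ℚ) / h + 1 / 2⌋ with hm
  have hhQ : (0 : ℚ) < h := by exact_mod_cast hh
  have hk1 : -h ≤ 2 * (k - m * h) := by
    have := Int.floor_le ((k : ℚ) / h + 1 / 2)
    rw [← hm] at this
    have h2 : (m : ℚ) * h ≤ ((k : ℚ) / h + 1 / 2) * h := mul_le_mul_of_nonneg_right this hhQ.le
    rw [add_mul, div_mul_cancel₀ _ hhQ.ne'] at h2
    have : (-h : ℚ) ≤ 2 * (k - m * h) := by linarith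
    exact_mod_cast this
  have hk2 : 2 * (k - m * h) < h := by
    have := Int.lt_floor_add_one ((k : ℚ) / h + 1 / 2)
    rw [← hm] at this
    have h2 : ((k : ℚ) / h + 1 / 2) * h < ((m : ℚ) + 1) * h := mul_lt_mul_of_pos_right this hhQ
    rw [add_mul, div_mul_cancel₀ _ hhQ.ne'] at h2
    have : 2 * ((k : ℚ) - m * h) < h := by linarith
    exact_mod_cast this
  have hgoal : ∀ n, EwnEven w n h k = JJ w n h (k - m * h) +
      Bbar (n + 1) (((k - m * h : ℤ) : ℚ) / h) / ((n : ℂ) + 1) * (h : ℂ) ^ w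
    - Bbar (w - n + 1) (((k - m * h : ℤ) : ℚ) / h) / (((w - n : ℕ) : ℂ) + 1) * (h : ℂ) ^ w := by
    intro n
    rw [Bbar_shift _ _ _ _ hh, Bbar_shift _ _ _ _ hh, hm, ← Iwn_eq_JJ w n h k hh]
    rfl
  simp only [hgoal]
  rw [← hper h k hh m]
  generalize k - m * h = k' at *
  by_cases hk : 0 ≤ k'
  · exact hc h k' hh hk (by omega)
  · have := hc h (-k') hh (by omega) (by omega)
    rw [hodd h k' hh] at this
    rw [← neg_neg (E h k'), this, ← Finset.sum_neg_distrib]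
    apply Finset.sum_congr rfl
    intro n hn
    simp only [Finset.mem_filter, Finset.mem_range] at hn
    obtain ⟨h1, h2, h3⟩ := hn
    have hwn : Even (w - n) := by
      rw [Nat.even_sub h1.le]; exact ⟨fun _ => h3, fun _ => hw⟩
    have e : ((-k' : ℤ) : ℚ) / h = -((k' : ℚ) / h) := by push_cast; ring
    rw [JJ_neg w n h k' h3 hwn, e, Bbar_neg _ h3.add_one (by omega), Bbar_neg _ hwn.add_one (by omega)]
    ring
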